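/- arXiv:2212.13859 — 2 statements merged into one kernel-verified Lean document; each statement's English description precedes it below -/
import Mathlib

section
/- Fix k, α₁, θ ∈ ℝ. For ε > 0 let d0(ε) = Re(Tr(U_YY(k·√ε)))/2, where the walk unitary U_YY is taken with coin angle α = α₁·√ε and twist angle θ. Then the continuous-limit energy spectrum is lim_{ε→0⁺} arccos(d0(ε))/(2ε) = |k·(2α₁ − k·sin θ)|. -/
open Matrix Filter Topology

noncomputable def σx : Matrix (Fin 2) (Fin 2) ℂ := !![0, 1; 1, 0]
noncomputable def σy : Matrix (Fin 2) (Fin 2) ℂ := !![0, -Complex.I; Complex.I, 0]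
noncomputable def σz : Matrix (Fin 2) (Fin 2) ℂ := !![1, 0; 0, -1]

/-- Rotation about the x-axis by angle `t`. -/
noncomputable def Rx (t : ℝ) : Matrix (Fin 2) (Fin 2) ℂ :=
  !![(Real.cos (t/2) : ℂ), -Complex.I * Real.sin (t/2);
     -Complex.I * Real.sin (t/2), (Real.cos (t/2) : ℂ)]

/-- Rotation about the y-axis by angle `t`. -/
noncomputable def Ry (t : ℝ) : Matrix (Fin 2) (Fin 2) ℂ :=
  !![(Real.cos (t/2) : ℂ), -(Real.sin (t/2) : ℂ);
     (Real.sin (t/2) : ℂ), (Real.cos (t/2) : ℂ)]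

/-- Rotation about the z-axis by angle `t`. -/
noncomputable def Rz (t : ℝ) : Matrix (Fin 2) (Fin 2) ℂ :=
  !![Complex.exp (-(Complex.I * t) / 2), 0; 0, Complex.exp ((Complex.I * t) / 2)]

/-- Fourier-space shift operator at momentum `κ`. -/
noncomputable def Sh (κ : ℝ) : Matrix (Fin 2) (Fin 2) ℂ :=
  !![Complex.exp (Complex.I * κ), 0; 0, Complex.exp (-(Complex.I * κ))]

/-- The coin operator `Cα`. -/
noncomputable def Calpha (α : ℝ) : Matrix (Fin 2) (Fin 2) ℂ :=
  !![(Real.sin α : ℂ), -Complex.I * Real.cos α;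
     Complex.I * Real.cos α, -(Real.sin α : ℂ)]

/-- The coin operator `Cβ`. -/
noncomputable def Cbeta (α : ℝ) : Matrix (Fin 2) (Fin 2) ℂ :=
  !![-(Real.cos α : ℂ), -Complex.I * Real.sin α;
     -Complex.I * Real.sin α, -(Real.cos α : ℂ)]

/-- The massless homogeneous Y–Y twisted quantum walk unitary at momentum `k`,
coin angle `α` and twist angle `θ`: `U_YY = (W_β · W_α)²` with
`W_α = S(k)·Cα` and `W_β = R_y(−θ)·S(k)·R_y(θ)·Cβ`. -/
noncomputable def UYY (k α θ : ℝ) : Matrix (Fin 2) (Fin 2) ℂ :=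
  (Ry (-θ) * Sh k * Ry θ * Cbeta α * (Sh k * Calpha α)) *
    (Ry (-θ) * Sh k * Ry θ * Cbeta α * (Sh k * Calpha α))

/-!
Both coins are x-rotations, up to a factor `σy` and a sign: `Cα = R_x(2α) σy` and `Cβ = -R_x(-2α)`.
Hence `W_β W_α = -(R_y(-θ) S R_y(θ)) (R_x(-2α) S R_x(2α)) σy`, where `S = cos k + i sin k σz`; the
two conjugations turn `σz` through `θ` towards `-σx` and through `2α` towards `σy`. So `W_β W_α` has
determinant `-1` and trace `-2ip`, with `p = sin k (cos k sin 2α - sin k sin θ cos 2α)`.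
The trace of its square is therefore `2 - 4p²`, and `arccos(1 - 2p²) = 2 arcsin |p|`.
With `x = √ε`, each of the two factors of `p` is of first order in `x`, with derivatives `k` and
`2α₁ - k sin θ` at `0`, which gives the limit of `|p| / ε`.
-/

/-- The walk operator `W_β · W_α`, whose square is `UYY`. -/
noncomputable def walkStep (k α θ : ℝ) : Matrix (Fin 2) (Fin 2) ℂ :=
  Ry (-θ) * Sh k * Ry θ * Cbeta α * (Sh k * Calpha α)

/-- The sine of half the quasi-energy: if `sin φ = sinHalfEnergy k α θ`, then `walkStep k α θ` has
eigenvalues `exp (-iφ)` and `-exp (iφ)`, so that `UYY k α θ` has eigenvalues `exp (∓2iφ)`. -/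
noncomputable def sinHalfEnergy (k α θ : ℝ) : ℝ :=
  Real.sin k * (Real.cos k * Real.sin (2 * α) - Real.sin k * Real.sin θ * Real.cos (2 * α))

lemma Rx_neg_mul_Rx (t : ℝ) : Rx (-t) * Rx t = 1 := by
  have h := Complex.cos_sq_add_sin_sq (t / 2)
  ext i j
  fin_cases i <;> fin_cases j <;> simp [Rx, neg_div] <;> grind [Complex.I_sq]

lemma Ry_neg_mul_Ry (t : ℝ) : Ry (-t) * Ry t = 1 := by
  have h := Complex.cos_sq_add_sin_sq (t / 2)
  ext i j
  fin_cases i <;> fin_cases j <;> simp [Ry, neg_div] <;> grind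

lemma Rx_neg_mul_σz_mul_Rx (t : ℝ) :
    Rx (-t) * σz * Rx t = (Real.cos t : ℂ) • σz + (Real.sin t : ℂ) • σy := by
  obtain ⟨s, rfl⟩ : ∃ s, t = 2 * s := ⟨t / 2, by ring⟩
  ext i j
  fin_cases i <;> fin_cases j <;>
    simp [Rx, σy, σz, neg_div, Complex.cos_two_mul', Complex.sin_two_mul] <;> grind [Complex.I_sq]

lemma Ry_neg_mul_σz_mul_Ry (t : ℝ) :
    Ry (-t) * σz * Ry t = (Real.cos t : ℂ) • σz - (Real.sin t : ℂ) • σx := by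
  obtain ⟨s, rfl⟩ : ∃ s, t = 2 * s := ⟨t / 2, by ring⟩
  ext i j
  fin_cases i <;> fin_cases j <;>
    simp [Ry, σx, σz, neg_div, Complex.cos_two_mul', Complex.sin_two_mul] <;> ring

lemma Sh_eq_cos_add_sin (κ : ℝ) :
    Sh κ = (Real.cos κ : ℂ) • 1 + (Complex.I * Real.sin κ) • σz := by
  ext i j
  fin_cases i <;> fin_cases j <;>
    simp [Sh, σz, mul_comm Complex.I, Complex.exp_mul_I, ← neg_mul]

lemma mul_Sh_mul_of_mul_eq_one {A B : Matrix (Fin 2) (Fin 2) ℂ} (h : A * B = 1) (κ : ℝ) :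
    A * Sh κ * B = (Real.cos κ : ℂ) • 1 + (Complex.I * Real.sin κ) • (A * σz * B) := by
  simp [Sh_eq_cos_add_sin, mul_add, add_mul, h]

lemma Cbeta_eq_neg_Rx (α : ℝ) : Cbeta α = -Rx (-(2 * α)) := by
  ext i j
  fin_cases i <;> fin_cases j <;> simp [Cbeta, Rx, neg_div]

lemma Calpha_eq_Rx_mul_σy (α : ℝ) : Calpha α = Rx (2 * α) * σy := by
  ext i j
  fin_cases i <;> fin_cases j <;> simp [Calpha, Rx, σy] <;> grind [Complex.I_sq]

lemma walkStep_eq_neg_conj_mul_conj_mul_σy (k α θ : ℝ) :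
    walkStep k α θ =
      -(Ry (-θ) * Sh k * Ry θ * (Rx (-(2 * α)) * Sh k * Rx (2 * α)) * σy) := by
  simp only [walkStep, Cbeta_eq_neg_Rx, Calpha_eq_Rx_mul_σy, Matrix.mul_neg, Matrix.neg_mul,
    Matrix.mul_assoc]

lemma det_Sh (κ : ℝ) : (Sh κ).det = 1 := by
  simp [Sh, Matrix.det_fin_two_of, ← Complex.exp_add]

lemma det_σy : σy.det = -1 := by
  simp [σy, Matrix.det_fin_two_of]

lemma det_mul_Sh_mul_of_mul_eq_one {A B : Matrix (Fin 2) (Fin 2) ℂ} (h : A * B = 1) (κ : ℝ) :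
    (A * Sh κ * B).det = 1 := by
  rw [Matrix.det_mul_right_comm, h, one_mul, det_Sh]

lemma det_walkStep (k α θ : ℝ) : (walkStep k α θ).det = -1 := by
  rw [walkStep_eq_neg_conj_mul_conj_mul_σy, Matrix.det_neg, Matrix.det_mul, Matrix.det_mul,
    det_mul_Sh_mul_of_mul_eq_one (Ry_neg_mul_Ry θ),
    det_mul_Sh_mul_of_mul_eq_one (Rx_neg_mul_Rx (2 * α)), det_σy]
  simp

lemma trace_mul_mul_σy (a b u v x y : ℂ) :
    ((a • 1 + b • (u • σz - v • σx)) * (a • 1 + b • (x • σz + y • σy)) * σy).trace =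
      2 * b * (a * y + Complex.I * b * v * x) := by
  simp only [σx, σy, σz, Matrix.one_fin_two, Matrix.smul_of, Matrix.smul_cons, Matrix.smul_empty,
    smul_eq_mul, Matrix.of_add_of, Matrix.of_sub_of, Matrix.add_cons, Matrix.sub_cons,
    Matrix.head_cons, Matrix.tail_cons, Matrix.empty_add_empty, Matrix.zero_empty, sub_self,
    Matrix.mul_fin_two, Matrix.trace_fin_two_of]
  linear_combination -2 * a * b * y * Complex.I_sq

lemma trace_walkStep (k α θ : ℝ) :
    (walkStep k α θ).trace = -2 * Complex.I * sinHalfEnergy k α θ := by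
  rw [walkStep_eq_neg_conj_mul_conj_mul_σy, Matrix.trace_neg,
    mul_Sh_mul_of_mul_eq_one (Ry_neg_mul_Ry θ), mul_Sh_mul_of_mul_eq_one (Rx_neg_mul_Rx (2 * α)),
    Ry_neg_mul_σz_mul_Ry, Rx_neg_mul_σz_mul_Rx, trace_mul_mul_σy, sinHalfEnergy]
  push_cast
  linear_combination -2 * Complex.I * Complex.sin k ^ 2 * Complex.sin θ * Complex.cos (2 * α) *
    Complex.I_sq

lemma trace_mul_self_fin_two {R : Type*} [CommRing R] (A : Matrix (Fin 2) (Fin 2) R) :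
    (A * A).trace = A.trace ^ 2 - 2 * A.det := by
  simp only [Matrix.trace_fin_two, Matrix.det_fin_two, Matrix.mul_apply, Fin.sum_univ_two]
  ring

lemma trace_UYY (k α θ : ℝ) :
    (UYY k α θ).trace = ((2 - 4 * sinHalfEnergy k α θ ^ 2 : ℝ) : ℂ) := by
  rw [UYY, ← walkStep, trace_mul_self_fin_two, trace_walkStep, det_walkStep]
  push_cast
  linear_combination 4 * (sinHalfEnergy k α θ : ℂ) ^ 2 * Complex.I_sq

lemma trace_UYY_re_div_two (k α θ : ℝ) :
    (UYY k α θ).trace.re / 2 = 1 - 2 * sinHalfEnergy k α θ ^ 2 := by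
  rw [trace_UYY, Complex.ofReal_re]
  ring

lemma arccos_one_sub_two_mul_sq (p : ℝ) :
    Real.arccos (1 - 2 * p ^ 2) = 2 * Real.arcsin |p| := by
  have hnonneg : 0 ≤ Real.arcsin |p| := Real.arcsin_nonneg.mpr (abs_nonneg p)
  rcases le_total |p| 1 with hp | hp
  · have hcos : 1 - 2 * p ^ 2 = Real.cos (2 * Real.arcsin |p|) := by
      rw [Real.cos_two_mul, Real.cos_sq', Real.sin_arcsin (by linarith [abs_nonneg p]) hp, sq_abs]
      ring
    rw [hcos, Real.arccos_cos (by positivity) (by linarith [Real.arcsin_le_pi_div_two |p|])]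
  · rw [Real.arcsin_of_one_le hp, Real.arccos_of_le_neg_one]
    · ring
    · linarith [(one_le_sq_iff_one_le_abs p).mpr hp]

lemma tendsto_arccos_one_sub_two_mul_sq_div {ι : Type*} {l : Filter ι} {p v : ι → ℝ} {L : ℝ}
    (hp : Tendsto p l (𝓝 0)) (hpv : Tendsto (fun x => |p x| / v x) l (𝓝 L)) :
    Tendsto (fun x => Real.arccos (1 - 2 * p x ^ 2) / (2 * v x)) l (𝓝 L) := by
  have harcsin : HasDerivAt Real.arcsin 1 0 := by
    simpa using Real.hasDerivAt_arcsin (x := 0) (by norm_num) (by norm_num)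
  have h := (hasFDerivWithinAt_univ.mpr harcsin.hasFDerivAt).lim (c := fun x => (v x)⁻¹)
    (by simpa using hp.abs) (.of_forall fun _ => Set.mem_univ _)
    (by simpa [div_eq_inv_mul] using hpv)
  simp only [arccos_one_sub_two_mul_sq, mul_div_mul_left _ _ (two_ne_zero' ℝ)]
  simpa [div_eq_inv_mul] using h

lemma tendsto_mul_div_sq_of_hasDerivAt {𝕜 : Type*} [NontriviallyNormedField 𝕜] {f g : 𝕜 → 𝕜}
    {f' g' a : 𝕜} (hf : HasDerivAt f f' a) (hg : HasDerivAt g g' a) (hfa : f a = 0)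
    (hga : g a = 0) :
    Tendsto (fun x => f x * g x / (x - a) ^ 2) (𝓝[≠] a) (𝓝 (f' * g')) := by
  refine (hf.tendsto_slope.mul hg.tendsto_slope).congr fun x => ?_
  rw [slope_def_field, slope_def_field, hfa, hga, sub_zero, sub_zero, div_mul_div_comm, sq]

lemma tendsto_sinHalfEnergy_div_sq (k α θ : ℝ) :
    Tendsto (fun x => sinHalfEnergy (k * x) (α * x) θ / x ^ 2) (𝓝[≠] 0)
      (𝓝 (k * (2 * α - k * Real.sin θ))) := by
  have hsin (a : ℝ) : HasDerivAt (fun x => Real.sin (a * x)) a 0 := by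
    simpa using ((hasDerivAt_id (0 : ℝ)).const_mul a).sin
  have hcos (a : ℝ) : HasDerivAt (fun x => Real.cos (a * x)) 0 0 := by
    simpa using ((hasDerivAt_id (0 : ℝ)).const_mul a).cos
  have hfactor := ((hcos k).mul (hsin (2 * α))).sub
    (((hsin k).mul_const (Real.sin θ)).mul (hcos (2 * α)))
  have h := tendsto_mul_div_sq_of_hasDerivAt (hsin k) hfactor (by simp) (by simp)
  simpa [sinHalfEnergy, mul_assoc] using h

lemma tendsto_sqrt_nhdsGT_zero : Tendsto Real.sqrt (𝓝[>] 0) (𝓝[>] 0) := by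
  refine tendsto_nhdsWithin_iff.mpr ⟨?_, ?_⟩
  · simpa using (Real.continuous_sqrt.tendsto 0).mono_left nhdsWithin_le_nhds
  · filter_upwards [self_mem_nhdsWithin] with ε hε using Real.sqrt_pos.mpr hε

open Filter Topology in
/-- Continuous-limit energy spectrum of the homogeneous Y–Y twisted walk:
`arccos(d0(ε))/(2ε) → |k(2α₁ − k sin θ)|` as `ε → 0⁺`. -/
theorem UYY_spectrum_continuous_limit (k α₁ θ : ℝ) :
    Tendsto
      (fun ε : ℝ =>
        Real.arccos ((UYY (k * Real.sqrt ε) (α₁ * Real.sqrt ε) θ).trace.re / 2)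
          / (2 * ε))
      (nhdsWithin 0 (Set.Ioi 0))
      (nhds |k * (2 * α₁ - k * Real.sin θ)|) := by
  have hzero : Tendsto (fun ε => sinHalfEnergy (k * √ε) (α₁ * √ε) θ) (𝓝[>] 0) (𝓝 0) := by
    have hcont : Continuous fun ε => sinHalfEnergy (k * √ε) (α₁ * √ε) θ := by
      unfold sinHalfEnergy
      fun_prop
    simpa [sinHalfEnergy] using (hcont.tendsto 0).mono_left nhdsWithin_le_nhds
  have hslope := ((tendsto_sinHalfEnergy_div_sq k α₁ θ).comp
    (tendsto_sqrt_nhdsGT_zero.mono_right (nhdsGT_le_nhdsNE 0))).abs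
  simp only [trace_UYY_re_div_two]
  refine tendsto_arccos_one_sub_two_mul_sq_div hzero (hslope.congr' ?_)
  filter_upwards [self_mem_nhdsWithin] with ε (hε : 0 < ε)
  simp [abs_div, Real.sq_sqrt hε.le, abs_of_pos hε]
end

section
/- Let δ, θ0, φ, ζ ∈ ℝ, let C = C(δ,θ0,φ,ζ) be the general coin operator, and let K = C⁻¹·σz·C. Then the anticommutator σy·K + K·σy is the zero matrix if and only if sin(φ)·sin(θ0) = 0. -/
open Matrix Filter Topology

/-- The massless alternate-twist walk unitary at momentum `k`, coin angle `α`
and twist angle `θ`: `U_XI = W_{β2} · W_α · W_{β1} · W_α` with `W_α = S(k)·Cα`,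
`W_{β1} = R_x(−θ)·S(k)·R_x(θ)·Cβ` and `W_{β2} = S(k)·Cβ`. -/
noncomputable def UXI (k α θ : ℝ) : Matrix (Fin 2) (Fin 2) ℂ :=
  (Sh k * Cbeta α) * (Sh k * Calpha α) *
    (Rx (-θ) * Sh k * Rx θ * Cbeta α) * (Sh k * Calpha α)

/-- The general coin operator `C(δ,θ,φ,ζ) = e^{iδ}·R_z(ζ)·R_y(θ)·R_z(φ)`. -/
noncomputable def coin (δ θ φ ζ : ℝ) : Matrix (Fin 2) (Fin 2) ℂ :=
  Complex.exp (Complex.I * δ) • (Rz ζ * Ry θ * Rz φ)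

/-!
Conjugation by a coin rotates the vector `v` in `v · σ`, so `C⁻¹ σz C` is again of the form `v · σ`.
Since the Pauli matrices pairwise anticommute and square to `1`, the anticommutator of `v · σ` and
`w · σ` is `2 (v ⬝ w)` times the identity; with `w` the `y`-axis, `v ⬝ w` is the `y`-coordinate
`sin θ0 * sin φ` of `v`.
-/

/-- The matrix `v · σ = v₀ σx + v₁ σy + v₂ σz` attached to a vector `v` of coefficients, through
which conjugation by the coin is read as a rotation of `v`. Coefficients are complex, so that every
traceless matrix is of this form. -/
noncomputable def pauliDot (v : Fin 3 → ℂ) : Matrix (Fin 2) (Fin 2) ℂ :=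
  v 0 • σx + v 1 • σy + v 2 • σz

theorem pauliDot_eq_of (v : Fin 3 → ℂ) :
    pauliDot v = !![v 2, v 0 - Complex.I * v 1; v 0 + Complex.I * v 1, -v 2] := by
  ext i j
  fin_cases i <;> fin_cases j <;> simp [pauliDot, σx, σy, σz] <;> ring

theorem pauliDot_y_axis : pauliDot ![0, 1, 0] = σy := by
  simp [pauliDot]

theorem pauliDot_z_axis : pauliDot ![0, 0, 1] = σz := by
  simp [pauliDot]

theorem pauliDot_mul_add_mul_pauliDot (v w : Fin 3 → ℂ) :
    pauliDot v * pauliDot w + pauliDot w * pauliDot v =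
      (2 * (v ⬝ᵥ w)) • (1 : Matrix (Fin 2) (Fin 2) ℂ) := by
  simp only [pauliDot_eq_of, mul_fin_two, vec3_dotProduct, one_fin_two, smul_of, smul_cons,
    smul_empty, of_add_of, add_cons, head_cons, tail_cons, empty_add_empty, smul_eq_mul]
  congrm !![?_, ?_; ?_, ?_]
  · linear_combination -2 * v 1 * w 1 * Complex.I_sq
  · ring
  · ring
  · linear_combination -2 * v 1 * w 1 * Complex.I_sq

theorem semiconjBy_Rz_pauliDot (t : ℝ) (x y z : ℂ) :
    SemiconjBy (Rz t)
      (pauliDot ![x * Real.cos t + y * Real.sin t, y * Real.cos t - x * Real.sin t, z])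
      (pauliDot ![x, y, z]) := by
  have exp_half : Complex.exp (Complex.I * t / 2) =
      Complex.exp (-(Complex.I * t) / 2) * (Real.cos t + Real.sin t * Complex.I) := by
    rw [Complex.ofReal_cos, Complex.ofReal_sin, ← Complex.exp_mul_I, ← Complex.exp_add]
    ring_nf
  have exp_neg_half : Complex.exp (-(Complex.I * t) / 2) =
      Complex.exp (Complex.I * t / 2) * (Real.cos t - Real.sin t * Complex.I) := by
    rw [Complex.ofReal_cos, Complex.ofReal_sin, Complex.cos_sub_sin_I, ← Complex.exp_add]
    ring_nf
  simp only [SemiconjBy, pauliDot_eq_of, Rz, mul_fin_two, cons_val]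
  congrm !![?_, ?_; ?_, ?_]
  · ring
  · linear_combination (Complex.I * y - x) * exp_half +
      Complex.exp (-(Complex.I * t) / 2) * y * Real.sin t * Complex.I_sq
  · linear_combination -(x + Complex.I * y) * exp_neg_half +
      Complex.exp (Complex.I * t / 2) * y * Real.sin t * Complex.I_sq
  · ring

theorem semiconjBy_Ry_pauliDot (t : ℝ) (x y z : ℂ) :
    SemiconjBy (Ry t)
      (pauliDot ![x * Real.cos t - z * Real.sin t, y, z * Real.cos t + x * Real.sin t])
      (pauliDot ![x, y, z]) := by
  obtain ⟨s, rfl⟩ : ∃ s, t = 2 * s := ⟨t / 2, by ring⟩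
  have sin_sq_add_cos_sq : (Real.sin s : ℂ) ^ 2 + (Real.cos s : ℂ) ^ 2 = 1 :=
    mod_cast Real.sin_sq_add_cos_sq s
  simp only [SemiconjBy, pauliDot_eq_of, Ry, mul_fin_two, cons_val, Real.cos_two_mul,
    Real.sin_two_mul, mul_div_cancel_left₀ s two_ne_zero]
  push_cast at sin_sq_add_cos_sq ⊢
  congrm !![?_, ?_; ?_, ?_]
  · linear_combination 2 * z * Complex.cos s * sin_sq_add_cos_sq
  · linear_combination 2 * x * Complex.cos s * sin_sq_add_cos_sq
  · linear_combination 2 * x * Complex.cos s * sin_sq_add_cos_sq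
  · linear_combination -2 * z * Complex.cos s * sin_sq_add_cos_sq

theorem det_Rz (t : ℝ) : (Rz t).det = 1 := by
  simp [Rz, ← Complex.exp_add, neg_div]

theorem det_Ry (t : ℝ) : (Ry t).det = 1 := by
  rw [Ry, det_fin_two_of]
  norm_cast
  linear_combination Real.cos_sq_add_sin_sq (t / 2)

theorem det_coin (δ θ φ ζ : ℝ) :
    (coin δ θ φ ζ).det = Complex.exp (Complex.I * δ) ^ 2 := by
  simp [coin, det_Rz, det_Ry]

theorem isUnit_det_coin (δ θ φ ζ : ℝ) : IsUnit (coin δ θ φ ζ).det := by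
  rw [det_coin]
  exact (pow_ne_zero 2 (Complex.exp_ne_zero _)).isUnit

theorem semiconjBy_coin_σz (δ θ φ ζ : ℝ) :
    SemiconjBy (coin δ θ φ ζ)
      (pauliDot ![-Real.sin θ * Real.cos φ, Real.sin θ * Real.sin φ, Real.cos θ]) σz := by
  have hζ : SemiconjBy (Rz ζ) σz σz := by
    simpa [pauliDot_z_axis] using semiconjBy_Rz_pauliDot ζ 0 0 1
  have hθ : SemiconjBy (Ry θ) (pauliDot ![-Real.sin θ, 0, Real.cos θ]) σz := by
    simpa [pauliDot_z_axis] using semiconjBy_Ry_pauliDot θ 0 0 1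
  have hφ : SemiconjBy (Rz φ)
      (pauliDot ![-Real.sin θ * Real.cos φ, Real.sin θ * Real.sin φ, Real.cos θ])
      (pauliDot ![-Real.sin θ, 0, Real.cos θ]) := by
    simpa using semiconjBy_Rz_pauliDot φ (-Real.sin θ) 0 (Real.cos θ)
  exact ((hζ.mul_left hθ).mul_left hφ).smul_left (Complex.exp (Complex.I * δ))

theorem coin_inv_mul_σz_mul_coin (δ θ φ ζ : ℝ) :
    (coin δ θ φ ζ)⁻¹ * σz * coin δ θ φ ζ =
      pauliDot ![-Real.sin θ * Real.cos φ, Real.sin θ * Real.sin φ, Real.cos θ] := by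
  rw [Matrix.mul_assoc, ← (semiconjBy_coin_σz δ θ φ ζ).eq,
    nonsing_inv_mul_cancel_left _ _ (isUnit_det_coin δ θ φ ζ)]

/-- For `K = C⁻¹·σz·C` with `C` the general coin operator, the anticommutator
`σy·K + K·σy` vanishes iff `sin φ · sin θ0 = 0`. -/
theorem anticommutator_sigma_y_K_eq_zero_iff (δ θ0 φ ζ : ℝ) :
    σy * ((coin δ θ0 φ ζ)⁻¹ * σz * coin δ θ0 φ ζ) +
        ((coin δ θ0 φ ζ)⁻¹ * σz * coin δ θ0 φ ζ) * σy = 0 ↔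
      Real.sin φ * Real.sin θ0 = 0 := by
  have y_coord : ![0, 1, 0] ⬝ᵥ ![-(Real.sin θ0 : ℂ) * Real.cos φ, Real.sin θ0 * Real.sin φ,
      Real.cos θ0] = (Real.sin φ * Real.sin θ0 : ℝ) := by
    simp [mul_comm]
  rw [coin_inv_mul_σz_mul_coin, ← pauliDot_y_axis, pauliDot_mul_add_mul_pauliDot,
    smul_eq_zero_iff_left one_ne_zero, y_coord, mul_eq_zero_iff_left two_ne_zero,
    Complex.ofReal_eq_zero]
end
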